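/- arXiv:2505.17277 — 5 statements merged into one kernel-verified Lean document; each statement's English description precedes it below -/
import Mathlib

section
/- For any d ≥ 2 and any binary row-stochastic matrix φ ∈ Φ_b, the special prior π satisfies log(1/π(φ)) ≤ 2 + 2 c_φ · log d, where c_φ = min{d − d^self_φ, d − d^unif_φ + 1}. -/
open Finset

/-- The binary row-stochastic matrix associated with a map `f : [d] → [d]`. -/
def toMat (d : ℕ) (f : Fin d → Fin d) : Matrix (Fin d) (Fin d) ℝ :=
  fun i j => if f i = j then 1 else 0

/-- The set `Φ_b` of binary row-stochastic `d × d` matrices. -/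
noncomputable def PhiB (d : ℕ) : Finset (Matrix (Fin d) (Fin d) ℝ) := by
  classical exact Finset.image (toMat d) Finset.univ

/-- A matrix is row-stochastic if every row lies in the simplex. -/
def RowStochastic {d : ℕ} (φ : Matrix (Fin d) (Fin d) ℝ) : Prop :=
  ∀ i, (∀ j, 0 ≤ φ i j) ∧ ∑ j, φ i j = 1

/-- A vector lies in the probability simplex `Δ(d)`. -/
def InSimplex (d : ℕ) (p : Fin d → ℝ) : Prop :=
  (∀ i, 0 ≤ p i) ∧ ∑ i, p i = 1

/-- The `ψ`-induced weight of `φ`: `π_ψ(φ) = ∏ i ⟨ψ_{i:}, φ_{i:}⟩`. -/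
noncomputable def piInd {d : ℕ} (ψ φ : Matrix (Fin d) (Fin d) ℝ) : ℝ :=
  ∏ i, ∑ j, ψ i j * φ i j

/-- `ψ^k = ((d-2)/(d-1))·1 e_k^T + (1/(d(d-1)))·1 1^T`. -/
noncomputable def psiK (d : ℕ) (k : Fin d) : Matrix (Fin d) (Fin d) ℝ :=
  fun _ j => ((d : ℝ) - 2) / ((d : ℝ) - 1) * (if j = k then 1 else 0) + 1 / ((d : ℝ) * ((d : ℝ) - 1))

/-- `ψ^{d+1} = ((d-2)/(d-1))·I + (1/(d(d-1)))·1 1^T`. -/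
noncomputable def psiSelf (d : ℕ) : Matrix (Fin d) (Fin d) ℝ :=
  fun i j => ((d : ℝ) - 2) / ((d : ℝ) - 1) * (if i = j then 1 else 0) + 1 / ((d : ℝ) * ((d : ℝ) - 1))

/-- The special prior `π = (1/(2d)) Σ_k π_{ψ^k} + (1/2) π_{ψ^{d+1}}`. -/
noncomputable def priorPi (d : ℕ) (φ : Matrix (Fin d) (Fin d) ℝ) : ℝ :=
  1 / (2 * d) * ∑ k : Fin d, piInd (psiK d k) φ + 1 / 2 * piInd (psiSelf d) φ

/-- `d^self_φ`: the number of indices `i` whose row equals `e_i^T`. -/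
noncomputable def dSelf {d : ℕ} (φ : Matrix (Fin d) (Fin d) ℝ) : ℕ :=
  Nat.card {i : Fin d // φ i = fun j => if j = i then (1 : ℝ) else 0}

/-- `d^unif_φ`: the maximum multiplicity in the multiset of rows of `φ`. -/
noncomputable def dUnif {d : ℕ} (φ : Matrix (Fin d) (Fin d) ℝ) : ℕ :=
  Finset.univ.sup fun i : Fin d => Nat.card {j : Fin d // φ j = φ i}

/-- Complexity measure for binary row-stochastic matrices. -/
noncomputable def cB {d : ℕ} (φ : Matrix (Fin d) (Fin d) ℝ) : ℕ :=
  min (d - dSelf φ) (d - dUnif φ + 1)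

/-- `Q_φ`: distributions over `Φ_b` (indexed by maps `f : [d] → [d]`) averaging to `φ`. -/
def QSet (d : ℕ) (φ : Matrix (Fin d) (Fin d) ℝ) : Set ((Fin d → Fin d) → ℝ) :=
  {q | (∀ f, 0 ≤ q f) ∧ (∑ f, q f = 1) ∧ ∀ i j, ∑ f, q f * toMat d f i j = φ i j}

/-- Extended complexity measure `c_φ = inf_{q ∈ Q_φ} E_{φ'∼q}[c_{φ'}]`. -/
noncomputable def cGen (d : ℕ) (φ : Matrix (Fin d) (Fin d) ℝ) : ℝ :=
  sInf ((fun q => ∑ f : Fin d → Fin d, q f * (cB (toMat d f) : ℝ)) '' QSet d φ)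

/-- Matrix inner product `⟨φ, p ℓ^T⟩`. -/
noncomputable def lossInner {d : ℕ} (φ : Matrix (Fin d) (Fin d) ℝ) (p ℓ : Fin d → ℝ) : ℝ :=
  ∑ i, ∑ j, φ i j * (p i * ℓ j)

/-- The mean matrix `E_{f∼q}[φ_f]` of a weight vector over binary matrices. -/
noncomputable def mixMat (d : ℕ) (q : (Fin d → Fin d) → ℝ) : Matrix (Fin d) (Fin d) ℝ :=
  fun i j => ∑ f, q f * toMat d f i j

/-- KL divergence of `q` (a distribution over `Φ_b`, indexed by maps) from the prior `π`. -/
noncomputable def klPrior (d : ℕ) (q : (Fin d → Fin d) → ℝ) : ℝ :=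
  ∑ f, q f * Real.log (q f / priorPi d (toMat d f))

/-- The kernel `K(B,A) = Σ_{φ∈Φ_b} π(φ) Π_{i,j : φ_{ij}=1} B_{ij} A_{ij}`. -/
noncomputable def kernelK (d : ℕ) (B A : Matrix (Fin d) (Fin d) ℝ) : ℝ := by
  classical exact
    ∑ φ ∈ PhiB d, priorPi d φ * ∏ i, ∏ j, if φ i j = 1 then B i j * A i j else 1

/-!
Each of `ψ^1, …, ψ^{d+1}` smooths the matrix of a fixed map `g : [d] → [d]`: the constant maps for
`ψ^k`, the identity for `ψ^{d+1}`. For a binary matrix with associated map `f`, row `i` contributes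
to `π_ψ` the factor `1 - 1/d` if `f i = g i` and `1/(d(d-1)) ≥ d⁻²` otherwise, so that
`π_ψ ≥ (1 - 1/d)^d d^{-2h}` with `h` the Hamming distance from `f` to `g`. In these terms `c_φ` is
the smaller of the distance to the identity and one plus the distance to the nearest constant map.
For `d ≥ 3` Bernoulli's inequality gives `(1 - 1/d)^d ≥ (2/3)^3 ≥ 2e⁻²`, where the factor `2` pays
for the mixture weight `1/2`, and the extra `1/d` in the weight of a constant map is paid by the
`+ 1` in `c_φ`. For `d = 2` the inequality `(1 - 1/d)^d ≥ 2e⁻²` fails, but then every `ψ` is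
uniform and `π = 1/4 ≥ e⁻²`.
-/

theorem one_sub_div_rpow_le_one_sub_div_rpow {t a b : ℝ} (ha : 0 < a) (hta : t ≤ a) (hab : a ≤ b) :
    (1 - t / a) ^ a ≤ (1 - t / b) ^ b := by
  have hb : 0 < b := ha.trans_le hab
  have hta' : 0 ≤ 1 - t / a := sub_nonneg.2 ((div_le_one ha).2 hta)
  have htb : 0 ≤ 1 - t / b := sub_nonneg.2 ((div_le_one hb).2 (hta.trans hab))
  have bernoulli : 1 - t / a ≤ (1 - t / b) ^ (b / a) := by
    have h := one_add_mul_self_le_rpow_one_add (s := -(t / b)) (by linarith) ((one_le_div ha).2 hab)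
    rwa [mul_neg, div_mul_div_cancel₀' hb.ne', ← sub_eq_add_neg, ← sub_eq_add_neg] at h
  calc (1 - t / a) ^ a ≤ ((1 - t / b) ^ (b / a)) ^ a := Real.rpow_le_rpow hta' bernoulli ha.le
    _ = (1 - t / b) ^ b := by rw [← Real.rpow_mul htb, div_mul_cancel₀ b ha.ne']

theorem one_sub_one_div_natCast_nonneg (n : ℕ) : 0 ≤ 1 - 1 / (n : ℝ) :=
  sub_nonneg.2 (one_div (n : ℝ) ▸ Nat.cast_inv_le_one n)

theorem exp_neg_two_le : Real.exp (-2) ≤ 4 / 27 := by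
  have h : 27 / 4 ≤ Real.exp 2 := by
    have hsq : Real.exp 2 = Real.exp 1 * Real.exp 1 := by rw [← Real.exp_add, one_add_one_eq_two]
    nlinarith [Real.exp_one_gt_d9]
  rw [Real.exp_neg, inv_le_comm₀ (Real.exp_pos _) (by norm_num)]
  linarith

theorem two_mul_exp_neg_two_le_one_sub_one_div_pow {d : ℕ} (hd : 3 ≤ d) :
    2 * Real.exp (-2) ≤ (1 - 1 / (d : ℝ)) ^ d := by
  have hd' : (3 : ℝ) ≤ d := by exact_mod_cast hd
  calc 2 * Real.exp (-2) ≤ 2 * (4 / 27) := by gcongr; exact exp_neg_two_le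
    _ = (1 - 1 / 3 : ℝ) ^ (3 : ℝ) := by norm_num
    _ ≤ (1 - 1 / (d : ℝ)) ^ (d : ℝ) :=
      one_sub_div_rpow_le_one_sub_div_rpow (by norm_num) (by norm_num) hd'
    _ = (1 - 1 / (d : ℝ)) ^ d := Real.rpow_natCast _ _

section HammingDist

variable {ι : Type*} [Fintype ι] {β : ι → Type*} [∀ i, DecidableEq (β i)] (f g : ∀ i, β i)

theorem card_filter_eq_add_hammingDist : #{i | f i = g i} + hammingDist f g = Fintype.card ι :=
  card_filter_add_card_filter_not (s := univ) fun i => f i = g i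

theorem prod_ite_eq_pow_mul_pow_hammingDist {M : Type*} [CommMonoid M] (a b : M) :
    ∏ i, (if f i = g i then a else b) =
      a ^ (Fintype.card ι - hammingDist f g) * b ^ hammingDist f g := by
  rw [prod_ite, prod_const, prod_const, ← card_filter_eq_add_hammingDist f g,
    Nat.add_sub_cancel_right]
  rfl

end HammingDist

section Complexity

variable {d : ℕ} (f g : Fin d → Fin d)

theorem toMat_row_inj {i j : Fin d} : toMat d f i = toMat d g j ↔ f i = g j := by
  refine ⟨fun h => ?_, fun h => funext fun k => by simp only [toMat, h]⟩
  by_contra hne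
  have : (1 : ℝ) = 0 := by simpa [toMat, Ne.symm hne] using congrFun h (f i)
  exact one_ne_zero this

theorem sub_natCard_toMat_row_eq :
    d - Nat.card {i // toMat d f i = toMat d g i} = hammingDist f g := by
  have h := card_filter_eq_add_hammingDist f g
  rw [Fintype.card_fin] at h
  simp_rw [toMat_row_inj, Nat.card_eq_fintype_card, Fintype.card_subtype]
  omega

theorem sub_dSelf_toMat : d - dSelf (toMat d f) = hammingDist f id := by
  have hrow (i : Fin d) : (fun j => if j = i then (1 : ℝ) else 0) = toMat d id i := by
    ext j
    simp only [toMat, id, eq_comm]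
  simp_rw [dSelf, hrow, sub_natCard_toMat_row_eq]

theorem exists_sub_dUnif_toMat (hd : d ≠ 0) :
    ∃ k, d - dUnif (toMat d f) = hammingDist f (fun _ => k) := by
  have : NeZero d := ⟨hd⟩
  obtain ⟨i, -, hi⟩ := exists_mem_eq_sup univ univ_nonempty
    fun i => Nat.card {j // toMat d f j = toMat d f i}
  refine ⟨f i, ?_⟩
  rw [dUnif, hi, ← sub_natCard_toMat_row_eq]
  rfl

end Complexity

/-- The matrix `((d-2)/(d-1))·φ_g + (1/(d(d-1)))·1 1^T`, a mixture of the binary matrix `φ_g` of the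
map `g` with the uniform one. The components `ψ^k` and `ψ^{d+1}` of the prior are the cases where
`g` is constantly `k` and where `g` is the identity. -/
noncomputable def smoothedMat (d : ℕ) (g : Fin d → Fin d) : Matrix (Fin d) (Fin d) ℝ :=
  fun i j => ((d : ℝ) - 2) / ((d : ℝ) - 1) * toMat d g i j + 1 / ((d : ℝ) * ((d : ℝ) - 1))

section Prior

variable {d : ℕ}

theorem psiK_eq_smoothedMat (k : Fin d) : psiK d k = smoothedMat d fun _ => k := by
  ext i j
  simp only [psiK, smoothedMat, toMat, eq_comm]

theorem psiSelf_eq_smoothedMat : psiSelf d = smoothedMat d id :=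
  rfl

theorem smoothedMat_apply (hd : 2 ≤ d) (g : Fin d → Fin d) (i j : Fin d) :
    smoothedMat d g i j =
      if j = g i then 1 - 1 / (d : ℝ) else 1 / ((d : ℝ) * ((d : ℝ) - 1)) := by
  have hd' : (2 : ℝ) ≤ d := by exact_mod_cast hd
  have h0 : (d : ℝ) ≠ 0 := by linarith
  have h1 : (d : ℝ) - 1 ≠ 0 := by linarith
  simp only [smoothedMat, toMat, eq_comm (a := g i)]
  split_ifs
  · field_simp
    ring
  · ring

theorem piInd_toMat (ψ : Matrix (Fin d) (Fin d) ℝ) (f : Fin d → Fin d) :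
    piInd ψ (toMat d f) = ∏ i, ψ i (f i) := by
  simp [piInd, toMat]

theorem piInd_smoothedMat_toMat (hd : 2 ≤ d) (f g : Fin d → Fin d) :
    piInd (smoothedMat d g) (toMat d f) = (1 - 1 / (d : ℝ)) ^ (d - hammingDist f g) *
      (1 / ((d : ℝ) * ((d : ℝ) - 1))) ^ hammingDist f g := by
  simp_rw [piInd_toMat, smoothedMat_apply hd, prod_ite_eq_pow_mul_pow_hammingDist,
    Fintype.card_fin]

theorem pow_mul_pow_hammingDist_le_piInd_smoothedMat (hd : 2 ≤ d) (f g : Fin d → Fin d) :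
    (1 - 1 / (d : ℝ)) ^ d * ((d : ℝ) ^ 2)⁻¹ ^ hammingDist f g ≤
      piInd (smoothedMat d g) (toMat d f) := by
  have hd' : (2 : ℝ) ≤ d := by exact_mod_cast hd
  have hnonneg := one_sub_one_div_natCast_nonneg d
  have hle_one : 1 - 1 / (d : ℝ) ≤ 1 := sub_le_self 1 (by positivity)
  have hoff : ((d : ℝ) ^ 2)⁻¹ ≤ 1 / ((d : ℝ) * ((d : ℝ) - 1)) := by
    rw [← one_div]
    exact one_div_le_one_div_of_le (mul_pos (by linarith) (by linarith)) (by nlinarith)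
  rw [piInd_smoothedMat_toMat hd]
  gcongr ?_ * ?_ ^ _
  exact pow_le_pow_of_le_one hnonneg hle_one (Nat.sub_le _ _)

theorem piInd_smoothedMat_toMat_nonneg (hd : 2 ≤ d) (f g : Fin d → Fin d) :
    0 ≤ piInd (smoothedMat d g) (toMat d f) := by
  have hbase := one_sub_one_div_natCast_nonneg d
  exact le_trans (by positivity) (pow_mul_pow_hammingDist_le_piInd_smoothedMat hd f g)

theorem two_mul_exp_neg_two_mul_pow_le_piInd_smoothedMat (hd : 3 ≤ d) (f g : Fin d → Fin d) :
    2 * Real.exp (-2) * ((d : ℝ) ^ 2)⁻¹ ^ hammingDist f g ≤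
      piInd (smoothedMat d g) (toMat d f) :=
  calc 2 * Real.exp (-2) * ((d : ℝ) ^ 2)⁻¹ ^ hammingDist f g
      ≤ (1 - 1 / (d : ℝ)) ^ d * ((d : ℝ) ^ 2)⁻¹ ^ hammingDist f g := by
        gcongr
        exact two_mul_exp_neg_two_le_one_sub_one_div_pow hd
    _ ≤ piInd (smoothedMat d g) (toMat d f) :=
        pow_mul_pow_hammingDist_le_piInd_smoothedMat (by omega) f g

theorem priorPi_eq_piInd_smoothedMat (φ : Matrix (Fin d) (Fin d) ℝ) :
    priorPi d φ = 1 / (2 * d) * ∑ k, piInd (smoothedMat d fun _ => k) φ +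
      1 / 2 * piInd (smoothedMat d id) φ := by
  simp_rw [priorPi, psiK_eq_smoothedMat, psiSelf_eq_smoothedMat]

theorem half_mul_piInd_smoothedMat_id_le_priorPi (hd : 2 ≤ d) (f : Fin d → Fin d) :
    1 / 2 * piInd (smoothedMat d id) (toMat d f) ≤ priorPi d (toMat d f) := by
  rw [priorPi_eq_piInd_smoothedMat]
  exact le_add_of_nonneg_left (mul_nonneg (by positivity)
    (sum_nonneg fun k _ => piInd_smoothedMat_toMat_nonneg hd f fun _ => k))

theorem mul_piInd_smoothedMat_const_le_priorPi (hd : 2 ≤ d) (f : Fin d → Fin d) (k : Fin d) :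
    1 / (2 * d) * piInd (smoothedMat d fun _ => k) (toMat d f) ≤ priorPi d (toMat d f) := by
  have hsum : piInd (smoothedMat d fun _ => k) (toMat d f) ≤
      ∑ l, piInd (smoothedMat d fun _ => l) (toMat d f) :=
    single_le_sum (f := fun l => piInd (smoothedMat d fun _ => l) (toMat d f))
      (fun l _ => piInd_smoothedMat_toMat_nonneg hd f fun _ => l) (mem_univ k)
  rw [priorPi_eq_piInd_smoothedMat]
  exact le_add_of_le_of_nonneg (by gcongr)
    (mul_nonneg (by norm_num) (piInd_smoothedMat_toMat_nonneg hd f id))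

theorem exp_neg_two_mul_pow_sub_dSelf_le_priorPi (hd : 3 ≤ d) (f : Fin d → Fin d) :
    Real.exp (-2) * ((d : ℝ) ^ 2)⁻¹ ^ (d - dSelf (toMat d f)) ≤ priorPi d (toMat d f) := by
  rw [sub_dSelf_toMat]
  linarith [two_mul_exp_neg_two_mul_pow_le_piInd_smoothedMat hd f id,
    half_mul_piInd_smoothedMat_id_le_priorPi (by omega) f]

theorem exp_neg_two_mul_pow_sub_dUnif_add_one_le_priorPi (hd : 3 ≤ d) (f : Fin d → Fin d) :
    Real.exp (-2) * ((d : ℝ) ^ 2)⁻¹ ^ (d - dUnif (toMat d f) + 1) ≤ priorPi d (toMat d f) := by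
  have hd' : (1 : ℝ) ≤ d := by exact_mod_cast (by omega : 1 ≤ d)
  have hinv : ((d : ℝ) ^ 2)⁻¹ ≤ (d : ℝ)⁻¹ :=
    inv_anti₀ (by linarith) (le_self_pow₀ hd' two_ne_zero)
  obtain ⟨k, hk⟩ := exists_sub_dUnif_toMat f (by omega)
  rw [hk, pow_succ']
  set h := hammingDist f fun _ => k
  calc Real.exp (-2) * (((d : ℝ) ^ 2)⁻¹ * ((d : ℝ) ^ 2)⁻¹ ^ h)
      ≤ Real.exp (-2) * ((d : ℝ)⁻¹ * ((d : ℝ) ^ 2)⁻¹ ^ h) := by gcongr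
    _ = 1 / (2 * d) * (2 * Real.exp (-2) * ((d : ℝ) ^ 2)⁻¹ ^ h) := by ring
    _ ≤ 1 / (2 * d) * piInd (smoothedMat d fun _ => k) (toMat d f) := by
      gcongr
      exact two_mul_exp_neg_two_mul_pow_le_piInd_smoothedMat hd f _
    _ ≤ priorPi d (toMat d f) := mul_piInd_smoothedMat_const_le_priorPi (by omega) f k

theorem priorPi_two_toMat (f : Fin 2 → Fin 2) : priorPi 2 (toMat 2 f) = 1 / 4 := by
  norm_num [priorPi, piInd_toMat, psiK, psiSelf]

theorem exp_neg_two_mul_pow_cB_le_priorPi (hd : 2 ≤ d) (f : Fin d → Fin d) :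
    Real.exp (-2) * ((d : ℝ) ^ 2)⁻¹ ^ cB (toMat d f) ≤ priorPi d (toMat d f) := by
  obtain rfl | hd3 := hd.eq_or_lt
  · have hpow : (((2 : ℕ) : ℝ) ^ 2)⁻¹ ^ cB (toMat 2 f) ≤ 1 :=
      pow_le_one₀ (by positivity) (by norm_num)
    rw [priorPi_two_toMat]
    linarith [mul_le_of_le_one_right (Real.exp_pos (-2)).le hpow, exp_neg_two_le]
  · obtain hc | hc := min_choice (d - dSelf (toMat d f)) (d - dUnif (toMat d f) + 1)
    · rw [cB, hc]
      exact exp_neg_two_mul_pow_sub_dSelf_le_priorPi hd3 f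
    · rw [cB, hc]
      exact exp_neg_two_mul_pow_sub_dUnif_add_one_le_priorPi hd3 f

theorem mem_PhiB {φ : Matrix (Fin d) (Fin d) ℝ} : φ ∈ PhiB d ↔ ∃ f, toMat d f = φ := by
  simp [PhiB]

end Prior

/-- For any `d ≥ 2` and any binary row-stochastic `φ ∈ Φ_b`, the special prior
satisfies `log(1/π(φ)) ≤ 2 + 2 c_φ log d`, where `c_φ = min{d − d^self_φ, d − d^unif_φ + 1}`. -/
theorem stmt4 (d : ℕ) (hd : 2 ≤ d) (φ : Matrix (Fin d) (Fin d) ℝ) (hφ : φ ∈ PhiB d) :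
    Real.log (1 / priorPi d φ) ≤ 2 + 2 * (cB φ : ℝ) * Real.log d := by
  obtain ⟨f, rfl⟩ := mem_PhiB.1 hφ
  have : (0 : ℝ) < d := by exact_mod_cast (by omega : 0 < d)
  set c := cB (toMat d f)
  have hlower : 0 < Real.exp (-2) * ((d : ℝ) ^ 2)⁻¹ ^ c := by positivity
  calc Real.log (1 / priorPi d (toMat d f))
      ≤ Real.log (1 / (Real.exp (-2) * ((d : ℝ) ^ 2)⁻¹ ^ c)) := by
        have hprior := exp_neg_two_mul_pow_cB_le_priorPi hd f
        exact Real.log_le_log (one_div_pos.2 (hlower.trans_le hprior))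
          (one_div_le_one_div_of_le hlower hprior)
    _ = Real.log (Real.exp 2 * (d : ℝ) ^ (2 * c)) := by
        rw [Real.exp_neg, pow_mul, inv_pow, ← mul_inv, one_div, inv_inv]
    _ = 2 + 2 * (c : ℝ) * Real.log d := by
        rw [Real.log_mul (by positivity) (by positivity), Real.log_exp, Real.log_pow]
        push_cast
        rfl
end

section
/- For any d ≥ 2 and any row-stochastic matrix φ ∈ S, the extended complexity measure satisfies c_φ ≤ min{d − d^self_φ, d − d^unif_φ + 1}, where d^self_φ is the number of indices i with φ_{i:} = e_i^T and d^unif_φ is the maximum multiplicity in the multiset of rows {φ_{1:}, …, φ_{d:}}. In particular, d^self_φ ≤ trace(φ) and d^unif_φ ≤ max_{q ∈ Q_φ} E_{φ'∼q}[d^unif_{φ'}]. -/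
open Finset

/-!
For every `q ∈ Q_φ`, linearity of expectation turns `c ≤ d - d^self = d - trace` and
`c ≤ d - d^unif + 1` on `Φ_b` into `c_φ ≤ d - trace φ` and `c_φ ≤ d - E_q[d^unif] + 1`. It remains
to find one `q ∈ Q_φ` with `d^unif_φ ≤ E_q[d^unif]`: draw an index independently from each
*distinct* row of `φ` and use the same index for all rows equal to it, so that rows which agree in
`φ` always agree in the sample.
-/

section FiniteExpectation

variable {R X Y : Type*} [Fintype X] [Fintype Y]

lemma sum_funOnFinite_map_mul [NonUnitalNonAssocSemiring R] (h : X → Y) (w : X → R) (F : Y → R) :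
    ∑ y, FunOnFinite.map h w y * F y = ∑ x, w x * F (h x) := by
  classical
  simp only [FunOnFinite.map_apply_apply, sum_mul]
  rw [← sum_fiberwise univ h]
  refine sum_congr rfl fun y _ => sum_congr rfl fun x hx => ?_
  rw [(mem_filter.mp hx).2]

variable [Semiring R] [PartialOrder R] [IsOrderedRing R] {w F : X → R} {c : R}

lemma le_sum_mul_of_mem_stdSimplex (hw : w ∈ stdSimplex R X) (hF : ∀ x, c ≤ F x) :
    c ≤ ∑ x, w x * F x :=
  calc c = ∑ x, w x * c := by rw [← sum_mul, hw.2, one_mul]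
    _ ≤ ∑ x, w x * F x := sum_le_sum fun x _ => mul_le_mul_of_nonneg_left (hF x) (hw.1 x)

lemma sum_mul_le_of_mem_stdSimplex (hw : w ∈ stdSimplex R X) (hF : ∀ x, F x ≤ c) :
    ∑ x, w x * F x ≤ c :=
  calc ∑ x, w x * F x ≤ ∑ x, w x * c :=
        sum_le_sum fun x _ => mul_le_mul_of_nonneg_left (hF x) (hw.1 x)
    _ = c := by rw [← sum_mul, hw.2, one_mul]

end FiniteExpectation

section ProductWeight

variable {ι α R : Type*} [Fintype ι] [Fintype α] [CommSemiring R]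

/-- The weight of `g : ι → α` when its coordinates are drawn independently, the `i`-th one with
weights `p i`: the finite, unnormalized analogue of a product measure. -/
def productWeight (p : ι → α → R) (g : ι → α) : R :=
  ∏ i, p i (g i)

variable [DecidableEq ι]

lemma sum_productWeight (p : ι → α → R) :
    ∑ g, productWeight p g = ∏ i, ∑ a, p i a :=
  (Fintype.prod_sum p).symm

lemma productWeight_mem_stdSimplex [PartialOrder R] [IsOrderedRing R] {p : ι → α → R}
    (hp : ∀ i, p i ∈ stdSimplex R α) : productWeight p ∈ stdSimplex R (ι → α) :=
  ⟨fun g => prod_nonneg fun i _ => (hp i).1 (g i),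
    (sum_productWeight p).trans (prod_eq_one fun i _ => (hp i).2)⟩

lemma sum_productWeight_mul_apply {p : ι → α → R} (hp : ∀ i, ∑ a, p i a = 1) (k : ι)
    (F : α → R) : ∑ g, productWeight p g * F (g k) = ∑ a, p k a * F a := by
  have tilt (g : ι → α) : productWeight p g * F (g k) =
      productWeight (fun i a => p i a * if i = k then F a else 1) g := by
    simp only [productWeight, prod_mul_distrib, Fintype.prod_ite_eq']
  simp only [tilt, sum_productWeight]
  rw [Fintype.prod_eq_single k fun i hi => by simp only [if_neg hi, mul_one, hp]]
  simp only [if_true]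

end ProductWeight

section RowCounts

variable {d : ℕ} (φ : Matrix (Fin d) (Fin d) ℝ)

lemma dSelf_le : dSelf φ ≤ d :=
  (Finite.card_subtype_le _).trans_eq (Nat.card_fin d)

lemma dUnif_le : dUnif φ ≤ d :=
  Finset.sup_le fun _ _ => (Finite.card_subtype_le _).trans_eq (Nat.card_fin d)

lemma cB_le_sub_dSelf : (cB φ : ℝ) ≤ d - dSelf φ := by
  rw [← Nat.cast_sub (dSelf_le φ)]
  exact_mod_cast min_le_left _ _

lemma cB_le_sub_dUnif_add_one : (cB φ : ℝ) ≤ d - dUnif φ + 1 := by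
  rw [← Nat.cast_sub (dUnif_le φ)]
  exact_mod_cast min_le_right _ _

open Classical in
lemma dSelf_eq_sum :
    (dSelf φ : ℝ) = ∑ i, if φ i = (fun j => if j = i then (1 : ℝ) else 0) then 1 else 0 := by
  rw [dSelf, Nat.card_eq_fintype_card, Fintype.card_subtype, natCast_card_filter]
  congr!

variable {φ}

lemma dSelf_le_trace (hφ : ∀ i, 0 ≤ φ i i) : (dSelf φ : ℝ) ≤ φ.trace := by
  classical
  rw [dSelf_eq_sum, Matrix.trace]
  refine sum_le_sum fun i _ => ?_
  split_ifs with h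
  · simp [h]
  · exact hφ i

lemma trace_toMat (f : Fin d → Fin d) : (toMat d f).trace = dSelf (toMat d f) := by
  classical
  rw [dSelf_eq_sum, Matrix.trace]
  refine sum_congr rfl fun i _ => if_congr ⟨fun h => ?_, fun h => ?_⟩ rfl rfl
  · funext j
    simp only [toMat, h, eq_comm]
  · simpa [toMat] using congrFun h i

lemma dUnif_le_dUnif_of_row_eq_imp {ψ : Matrix (Fin d) (Fin d) ℝ}
    (h : ∀ i j, φ i = φ j → ψ i = ψ j) : dUnif φ ≤ dUnif ψ :=
  sup_mono_fun fun i _ => Nat.card_mono (Set.toFinite {j | ψ j = ψ i}) fun j hj => h j i hj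

end RowCounts

section Decompositions

variable {d : ℕ} {φ : Matrix (Fin d) (Fin d) ℝ} {q : (Fin d → Fin d) → ℝ}

lemma mem_stdSimplex_of_mem_QSet (hq : q ∈ QSet d φ) : q ∈ stdSimplex ℝ (Fin d → Fin d) :=
  ⟨hq.1, hq.2.1⟩

lemma sum_mul_trace_toMat (hq : q ∈ QSet d φ) : ∑ f, q f * (toMat d f).trace = φ.trace := by
  simp only [Matrix.trace, mul_sum, Matrix.diag_apply]
  rw [sum_comm]
  exact sum_congr rfl fun i _ => hq.2.2 i i

lemma cGen_le_sum_mul_of_cB_le {F : (Fin d → Fin d) → ℝ} (hq : q ∈ QSet d φ)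
    (hF : ∀ f, cB (toMat d f) ≤ F f) : cGen d φ ≤ ∑ f, q f * F f := by
  have bddBelow : BddBelow ((fun q => ∑ f, q f * (cB (toMat d f) : ℝ)) '' QSet d φ) := by
    refine ⟨0, ?_⟩
    rintro _ ⟨p, hp, rfl⟩
    exact sum_nonneg fun f _ => mul_nonneg (hp.1 f) (Nat.cast_nonneg _)
  exact (csInf_le bddBelow ⟨q, hq, rfl⟩).trans
    (sum_le_sum fun f _ => mul_le_mul_of_nonneg_left (hF f) (hq.1 f))

lemma cGen_le_sub_trace (hq : q ∈ QSet d φ) : cGen d φ ≤ d - φ.trace :=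
  calc cGen d φ ≤ ∑ f, q f * (d - (toMat d f).trace) :=
        cGen_le_sum_mul_of_cB_le hq fun f => trace_toMat f ▸ cB_le_sub_dSelf _
    _ = d - φ.trace := by
        simp only [mul_sub, sum_sub_distrib, ← sum_mul, hq.2.1, one_mul, sum_mul_trace_toMat hq]

lemma cGen_le_sub_sum_mul_dUnif (hq : q ∈ QSet d φ) :
    cGen d φ ≤ d - ∑ f, q f * (dUnif (toMat d f) : ℝ) + 1 :=
  calc cGen d φ ≤ ∑ f, q f * (d - dUnif (toMat d f) + 1) :=
        cGen_le_sum_mul_of_cB_le hq fun _ => cB_le_sub_dUnif_add_one _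
    _ = d - ∑ f, q f * (dUnif (toMat d f) : ℝ) + 1 := by
        simp only [mul_add, mul_sub, sum_add_distrib, sum_sub_distrib, ← sum_mul, hq.2.1, one_mul]

lemma sum_mul_dUnif_le_sSup (hq : q ∈ QSet d φ) : ∑ f, q f * (dUnif (toMat d f) : ℝ) ≤
    sSup ((fun q => ∑ f, q f * (dUnif (toMat d f) : ℝ)) '' QSet d φ) := by
  refine le_csSup ⟨d, ?_⟩ ⟨q, hq, rfl⟩
  rintro _ ⟨p, hp, rfl⟩
  exact sum_mul_le_of_mem_stdSimplex (mem_stdSimplex_of_mem_QSet hp)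
    fun _ => Nat.cast_le.mpr (dUnif_le _)

end Decompositions

section RowCoupling

variable {d : ℕ} {φ : Matrix (Fin d) (Fin d) ℝ}

open Classical in
/-- The distribution over `Φ_b` obtained by drawing one index from each distinct row of `φ`,
independently, and using it for all rows of `φ` equal to that one. It is the image of the product
weight on maps out of `Set.range φ.row`, the set of distinct rows. -/
noncomputable def rowCoupling (φ : Matrix (Fin d) (Fin d) ℝ) : (Fin d → Fin d) → ℝ :=
  FunOnFinite.map (fun g : Set.range φ.row → Fin d => g ∘ Set.rangeFactorization φ.row)
    (productWeight Subtype.val)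

open Classical in
lemma sum_rowCoupling_mul (φ : Matrix (Fin d) (Fin d) ℝ) (F : (Fin d → Fin d) → ℝ) :
    ∑ f, rowCoupling φ f * F f =
      ∑ g : Set.range φ.row → Fin d,
        productWeight Subtype.val g * F (g ∘ Set.rangeFactorization φ.row) :=
  sum_funOnFinite_map_mul _ _ F

lemma RowStochastic.mem_stdSimplex_of_mem_range_row (hφ : RowStochastic φ) {v : Fin d → ℝ}
    (hv : v ∈ Set.range φ.row) : v ∈ stdSimplex ℝ (Fin d) := by
  obtain ⟨i, rfl⟩ := hv
  exact hφ i

lemma rowCoupling_mem_QSet (hφ : RowStochastic φ) : rowCoupling φ ∈ QSet d φ := by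
  classical
  have hrow (v : Set.range φ.row) := hφ.mem_stdSimplex_of_mem_range_row v.2
  have simplex : rowCoupling φ ∈ stdSimplex ℝ (Fin d → Fin d) :=
    stdSimplex.image_linearMap _ ⟨_, productWeight_mem_stdSimplex hrow, rfl⟩
  refine ⟨simplex.1, simplex.2, fun i j => ?_⟩
  calc ∑ f, rowCoupling φ f * toMat d f i j
      = ∑ g : Set.range φ.row → Fin d, productWeight Subtype.val g *
          if g (Set.rangeFactorization φ.row i) = j then 1 else 0 := sum_rowCoupling_mul φ _
    _ = ∑ a, φ i a * if a = j then 1 else 0 :=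
        sum_productWeight_mul_apply (fun v => (hrow v).2) (Set.rangeFactorization φ.row i)
          (fun a => if a = j then 1 else 0)
    _ = φ i j := by simp only [mul_ite, mul_one, mul_zero, Fintype.sum_ite_eq']

lemma dUnif_le_sum_rowCoupling_mul (hφ : RowStochastic φ) :
    (dUnif φ : ℝ) ≤ ∑ f, rowCoupling φ f * (dUnif (toMat d f) : ℝ) := by
  classical
  rw [sum_rowCoupling_mul]
  have hrow (v : Set.range φ.row) := hφ.mem_stdSimplex_of_mem_range_row v.2
  refine le_sum_mul_of_mem_stdSimplex (productWeight_mem_stdSimplex hrow) fun g =>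
    Nat.cast_le.mpr (dUnif_le_dUnif_of_row_eq_imp fun i j hij => ?_)
  have same_draw : Set.rangeFactorization φ.row i = Set.rangeFactorization φ.row j :=
    Subtype.ext hij
  funext k
  simp only [toMat, Function.comp_apply, same_draw]

end RowCoupling

/-- For any `d ≥ 2` and any row-stochastic `φ`, the extended complexity measure
satisfies `c_φ ≤ min{d − d^self_φ, d − d^unif_φ + 1}`.  In particular `d^self_φ ≤ trace(φ)` and
`d^unif_φ ≤ sup_{q ∈ Q_φ} E_{φ'∼q}[d^unif_{φ'}]`. -/
theorem stmt6 (d : ℕ) (hd : 2 ≤ d) (φ : Matrix (Fin d) (Fin d) ℝ) (hφ : RowStochastic φ) :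
    cGen d φ ≤ min ((d : ℝ) - (dSelf φ : ℝ)) ((d : ℝ) - (dUnif φ : ℝ) + 1) ∧
    (dSelf φ : ℝ) ≤ Matrix.trace φ ∧
    (dUnif φ : ℝ) ≤
      sSup ((fun q => ∑ f : Fin d → Fin d, q f * (dUnif (toMat d f) : ℝ)) '' QSet d φ) := by
  have hself := dSelf_le_trace fun i => (hφ i).1 i
  have hunif := dUnif_le_sum_rowCoupling_mul hφ
  have hq := rowCoupling_mem_QSet hφ
  refine ⟨le_min ?_ ?_, hself, hunif.trans (sum_mul_dUnif_le_sSup hq)⟩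
  · exact (cGen_le_sub_trace hq).trans (sub_le_sub_left hself _)
  · linarith [cGen_le_sub_sum_mul_dUnif hq]
end

section
/- The complexity measures can differ by a factor of order d: for any d ≥ 3 and any 0 < ε < 1, the row-stochastic matrix φ = (1−ε)·1 e_1^T + ε·I ∈ S satisfies c_φ ≤ 1 − ε (hence c_φ ≤ 1), while min{d − d^self_φ, d − d^unif_φ + 1} = d − 1. -/
open Finset

/-!
The matrix `(1 - ε)·1 e_1^T + ε·I` is the mixture of the constant map `1`, whose complexity is at
most `1` because all of its rows agree, and of the identity, whose complexity is `0` because all of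
its rows are self-loops; averaging bounds the extended complexity by `1 - ε`. The mixture itself
loses both features: only its first row is a self-loop and its rows are pairwise distinct, so the
formula for binary matrices evaluates to `min (d - 1) d`.
-/

section Complexity

variable {d : ℕ}

theorem bddBelow_expected_cB (φ : Matrix (Fin d) (Fin d) ℝ) :
    BddBelow ((fun q => ∑ f : Fin d → Fin d, q f * (cB (toMat d f) : ℝ)) '' QSet d φ) := by
  refine ⟨0, ?_⟩
  rintro _ ⟨q, ⟨hq_nonneg, -⟩, rfl⟩
  exact Finset.sum_nonneg fun f _ => mul_nonneg (hq_nonneg f) (Nat.cast_nonneg _)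

theorem cGen_mixMat_le {q : (Fin d → Fin d) → ℝ} (hq : q ∈ stdSimplex ℝ (Fin d → Fin d)) :
    cGen d (mixMat d q) ≤ ∑ f, q f * (cB (toMat d f) : ℝ) :=
  csInf_le (bddBelow_expected_cB _) ⟨q, ⟨hq.1, hq.2, fun _ _ => rfl⟩, rfl⟩

theorem cGen_convexCombo_toMat_le (f g : Fin d → Fin d) {a b : ℝ} (ha : 0 ≤ a) (hb : 0 ≤ b)
    (hab : a + b = 1) :
    cGen d (a • toMat d f + b • toMat d g) ≤ a * cB (toMat d f) + b * cB (toMat d g) := by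
  let q : (Fin d → Fin d) → ℝ := a • Pi.single f 1 + b • Pi.single g 1
  have hq : q ∈ stdSimplex ℝ (Fin d → Fin d) :=
    convex_stdSimplex ℝ _ (single_mem_stdSimplex ℝ f) (single_mem_stdSimplex ℝ g) ha hb hab
  have hq_sum (F : (Fin d → Fin d) → ℝ) : ∑ h, q h * F h = a * F f + b * F g := by
    simp [q, add_mul, Finset.sum_add_distrib, Pi.single_apply]
  have hq_mix : mixMat d q = a • toMat d f + b • toMat d g := by
    ext i j
    exact hq_sum fun h => toMat d h i j
  calc cGen d (a • toMat d f + b • toMat d g)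
      = cGen d (mixMat d q) := by rw [hq_mix]
    _ ≤ ∑ h, q h * (cB (toMat d h) : ℝ) := cGen_mixMat_le hq
    _ = a * cB (toMat d f) + b * cB (toMat d g) := hq_sum _

theorem dSelf_toMat_id : dSelf (toMat d id) = d := by
  have hrow (i : Fin d) : toMat d id i = fun j => if j = i then (1 : ℝ) else 0 := by
    ext j
    simp [toMat, eq_comm]
  simp [dSelf, hrow]

theorem cB_toMat_id : cB (toMat d id) = 0 := by
  simp [cB, dSelf_toMat_id]

theorem dUnif_const (row : Fin d → ℝ) : dUnif (fun _ : Fin d => row) = d := by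
  cases d <;> simp [dUnif, Finset.sup_const]

theorem cB_toMat_const_le_one (k : Fin d) : cB (toMat d fun _ => k) ≤ 1 := by
  have hunif : dUnif (toMat d fun _ => k) = d := dUnif_const _
  simp [cB, hunif]

theorem dUnif_eq_one_of_injective [NeZero d] {φ : Matrix (Fin d) (Fin d) ℝ}
    (hφ : Function.Injective φ) : dUnif φ = 1 := by
  simpa [dUnif, hφ.eq_iff] using Finset.sup_const (Finset.univ_nonempty (α := Fin d)) 1

end Complexity

/-- The matrix `(1 - ε)·1 e_k^T + ε·I`, written as a mixture of the binary matrices of the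
constant map `k` and of the identity map. -/
def constIdMix {d : ℕ} (ε : ℝ) (k : Fin d) : Matrix (Fin d) (Fin d) ℝ :=
  (1 - ε) • toMat d (fun _ => k) + ε • toMat d id

theorem constIdMix_apply {d : ℕ} (ε : ℝ) (k i j : Fin d) :
    constIdMix ε k i j = (1 - ε) * (if j = k then 1 else 0) + ε * (if i = j then 1 else 0) := by
  simp [constIdMix, toMat, eq_comm]

namespace constIdMix

variable {d : ℕ} {ε : ℝ}

theorem row_eq_indicator_iff (hε : ε ≠ 1) (k i : Fin d) :
    (constIdMix ε k i = fun j => if j = i then (1 : ℝ) else 0) ↔ i = k := by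
  constructor
  · intro hrow
    by_contra hik
    have hentry := congrFun hrow k
    simp only [constIdMix_apply, hik, Ne.symm hik, if_true, if_false] at hentry
    exact hε (by linarith)
  · rintro rfl
    ext j
    simp only [constIdMix_apply, eq_comm (a := i)]
    ring

theorem dSelf_eq_one (hε : ε ≠ 1) (k : Fin d) : dSelf (constIdMix ε k) = 1 := by
  simp [dSelf, row_eq_indicator_iff hε]

theorem injective (hε : ε ≠ 0) (k : Fin d) : Function.Injective (constIdMix ε k) := by
  intro i j hrow
  by_contra hij
  have hentry := congrFun hrow i
  simp only [constIdMix_apply, Ne.symm hij, if_true, if_false] at hentry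
  exact hε (by linarith)

theorem cGen_le (hε0 : 0 ≤ ε) (hε1 : ε ≤ 1) (k : Fin d) : cGen d (constIdMix ε k) ≤ 1 - ε := by
  have hconst : (cB (toMat d fun _ => k) : ℝ) ≤ 1 := mod_cast cB_toMat_const_le_one k
  calc cGen d (constIdMix ε k)
      ≤ (1 - ε) * cB (toMat d fun _ => k) + ε * cB (toMat d id) :=
        cGen_convexCombo_toMat_le _ _ (sub_nonneg.2 hε1) hε0 (sub_add_cancel 1 ε)
    _ = (1 - ε) * cB (toMat d fun _ => k) := by simp [cB_toMat_id]
    _ ≤ 1 - ε := mul_le_of_le_one_right (sub_nonneg.2 hε1) hconst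

end constIdMix

theorem stmt7_general {d : ℕ} (k : Fin d) {ε : ℝ} (hε0 : 0 < ε) (hε1 : ε < 1) :
    cGen d (constIdMix ε k) ≤ 1 - ε ∧
      min (d - dSelf (constIdMix ε k)) (d - dUnif (constIdMix ε k) + 1) = d - 1 := by
  have : NeZero d := k.neZero
  have hself := constIdMix.dSelf_eq_one hε1.ne k
  have hunif := dUnif_eq_one_of_injective (constIdMix.injective hε0.ne' k)
  refine ⟨constIdMix.cGen_le hε0.le hε1.le k, ?_⟩
  rw [hself, hunif]
  exact min_eq_left (Nat.le_succ _)

/-- For any `d ≥ 3` and `0 < ε < 1`, the row-stochastic matrix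
`φ = (1−ε)·1 e_1^T + ε·I` satisfies `c_φ ≤ 1 − ε` (hence `c_φ ≤ 1`), while
`min{d − d^self_φ, d − d^unif_φ + 1} = d − 1`. -/
theorem stmt7 (d : ℕ) (hd : 3 ≤ d) (ε : ℝ) (hε0 : 0 < ε) (hε1 : ε < 1)
    (φ : Matrix (Fin d) (Fin d) ℝ)
    (hφ : ∀ i j, φ i j =
      (1 - ε) * (if j = (⟨0, by omega⟩ : Fin d) then 1 else 0) + ε * (if i = j then 1 else 0)) :
    cGen d φ ≤ 1 - ε ∧ cGen d φ ≤ 1 ∧ min (d - dSelf φ) (d - dUnif φ + 1) = d - 1 := by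
  have hmix : φ = constIdMix ε ⟨0, by omega⟩ := by ext i j; rw [hφ, constIdMix_apply]
  obtain ⟨hc, hmin⟩ := hmix ▸ stmt7_general (⟨0, by omega⟩ : Fin d) hε0 hε1
  exact ⟨hc, by linarith, hmin⟩
end

section
/- Multiplicative Weights Update with an arbitrary prior satisfies a KL-divergence regret bound: let A be a finite set, η > 0, x_1 ∈ Δ(A) with full support, and let ℓ_1, …, ℓ_T ∈ [0,∞)^A be arbitrary nonnegative loss vectors. Define x_{t+1}(i) ∝ x_t(i)·exp(−η ℓ_t(i)) for each i ∈ A. Then for every comparator q ∈ Δ(A), Σ_{t=1}^T ⟨x_t − q, ℓ_t⟩ ≤ KL(q, x_1)/η + η Σ_{t=1}^T ‖ℓ_t‖_∞², where KL(p,q) = Σ_i p(i) log(p(i)/q(i)). -/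
open Finset

/-!
Relative entropy to the comparator is a potential. Writing `Z` for the normalizing constant of an
update `x ↦ y`, one has exactly `KL(q, y) - KL(q, x) = η ⟨q, ℓ⟩ + log Z`, while
`exp u ≤ 1 + u + u ^ 2` at `u = -η ℓ(i)` gives `log Z ≤ Z - 1 ≤ -η ⟨x, ℓ⟩ + η² ⟨x, ℓ²⟩`. Adding the
two, `η ⟨x - q, ℓ⟩` is at most the drop of the potential plus `η² ⟨x, ℓ²⟩`; the drops telescope, and
the final potential is nonnegative by Gibbs' inequality.
-/

lemma exp_le_one_add_add_sq {u : ℝ} (hu : u ≤ 1) : Real.exp u ≤ 1 + u + u ^ 2 := by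
  rcases le_total (-1) u with h | h
  · linarith [le_of_abs_le (Real.abs_exp_sub_one_sub_id_le (abs_le.2 ⟨h, hu⟩))]
  · have hexp : Real.exp u ≤ 1 := Real.exp_le_one_iff.2 (by linarith)
    nlinarith

lemma sub_le_mul_log_div {a b : ℝ} (ha : 0 ≤ a) (hb : 0 ≤ b) (hab : b = 0 → a = 0) :
    a - b ≤ a * Real.log (a / b) := by
  rcases hb.eq_or_lt' with rfl | hb
  · simp [hab rfl]
  · have hkl : 0 ≤ b * InformationTheory.klFun (a / b) :=
      mul_nonneg hb.le (InformationTheory.klFun_nonneg (div_nonneg ha hb.le))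
    have hexpand : b * InformationTheory.klFun (a / b) = a * Real.log (a / b) + b - a := by
      rw [InformationTheory.klFun_apply]
      field_simp
    linarith

section MultiplicativeWeights

variable {A : Type*} [Fintype A]

lemma pos_of_mem_stdSimplex {x : A → ℝ} (hx : x ∈ stdSimplex ℝ A) : 0 < x := by
  refine lt_of_le_of_ne hx.1 ?_
  rintro rfl
  simpa using hx.2

lemma sum_mul_sq_le_sq_iSup_abs {x : A → ℝ} (hx : x ∈ stdSimplex ℝ A) (l : A → ℝ) :
    ∑ i, x i * l i ^ 2 ≤ (⨆ i, |l i|) ^ 2 := by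
  calc ∑ i, x i * l i ^ 2 ≤ ∑ i, x i * (⨆ j, |l j|) ^ 2 := by
        refine sum_le_sum fun i _ => mul_le_mul_of_nonneg_left ?_ (hx.1 i)
        rw [← sq_abs (l i)]
        gcongr
        exact Finite.le_ciSup (fun j => |l j|) i
    _ = (⨆ i, |l i|) ^ 2 := by rw [← sum_mul, hx.2, one_mul]

/-- The Kullback–Leibler divergence `KL(p, q)` of weight vectors on a finite set, the potential in
the regret analysis. Division by zero makes every term with `q i = 0` vanish, so it is the usual
divergence only when `support p ⊆ support q`. -/
noncomputable def relEntropy (p q : A → ℝ) : ℝ :=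
  ∑ i, p i * Real.log (p i / q i)

lemma relEntropy_nonneg {p q : A → ℝ} (hp : 0 ≤ p) (hq : 0 ≤ q) (hsum : ∑ i, q i ≤ ∑ i, p i)
    (hpq : p.support ⊆ q.support) : 0 ≤ relEntropy p q := by
  calc (0 : ℝ) ≤ ∑ i, (p i - q i) := by rw [sum_sub_distrib]; exact sub_nonneg.2 hsum
    _ ≤ relEntropy p q :=
      sum_le_sum fun i _ => sub_le_mul_log_div (hp i) (hq i) fun hqi =>
        not_imp_not.1 (@hpq i) hqi

/-- The normalizing constant of the multiplicative weights update of `x` under the loss `l` with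
learning rate `η`. -/
noncomputable def mwuPartition (η : ℝ) (x l : A → ℝ) : ℝ :=
  ∑ i, x i * Real.exp (-η * l i)

/-- The multiplicative weights update `y i ∝ x i * exp (-η * l i)` of `x` under the loss `l` with
learning rate `η`. -/
noncomputable def mwuUpdate (η : ℝ) (x l : A → ℝ) (i : A) : ℝ :=
  x i * Real.exp (-η * l i) / mwuPartition η x l

lemma mwuPartition_pos {x : A → ℝ} (hx : 0 < x) (η : ℝ) (l : A → ℝ) :
    0 < mwuPartition η x l := by
  obtain ⟨hx_nonneg, i, hi⟩ := Pi.lt_def.1 hx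
  exact sum_pos' (fun j _ => mul_nonneg (hx_nonneg j) (Real.exp_pos _).le)
    ⟨i, mem_univ i, mul_pos hi (Real.exp_pos _)⟩

lemma mwuUpdate_mem_stdSimplex {x : A → ℝ} (hx : 0 < x) (η : ℝ) (l : A → ℝ) :
    mwuUpdate η x l ∈ stdSimplex ℝ A := by
  have hZ := mwuPartition_pos hx η l
  refine ⟨fun i => div_nonneg (mul_nonneg (hx.le i) (Real.exp_pos _).le) hZ.le, ?_⟩
  simp only [mwuUpdate]
  rw [← sum_div]
  exact div_self hZ.ne'

lemma support_mwuUpdate {x : A → ℝ} (hx : 0 < x) (η : ℝ) (l : A → ℝ) :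
    (mwuUpdate η x l).support = x.support := by
  ext i
  simp [mwuUpdate, (mwuPartition_pos hx η l).ne', Real.exp_ne_zero]

lemma relEntropy_mwuUpdate {x q : A → ℝ} (hx : 0 < x) (hq : ∑ i, q i = 1)
    (hqx : q.support ⊆ x.support) (η : ℝ) (l : A → ℝ) :
    relEntropy q (mwuUpdate η x l) =
      relEntropy q x + η * ∑ i, q i * l i + Real.log (mwuPartition η x l) := by
  have hZ := (mwuPartition_pos hx η l).ne'
  have hterm (i : A) : q i * Real.log (q i / mwuUpdate η x l i) =
      q i * Real.log (q i / x i) + η * (q i * l i) +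
        q i * Real.log (mwuPartition η x l) := by
    by_cases hqi : q i = 0
    · simp [hqi]
    have hxi : x i ≠ 0 := hqx hqi
    have hexp := Real.exp_ne_zero (-η * l i)
    rw [mwuUpdate, Real.log_div hqi (div_ne_zero (mul_ne_zero hxi hexp) hZ),
      Real.log_div (mul_ne_zero hxi hexp) hZ, Real.log_mul hxi hexp, Real.log_exp,
      Real.log_div hqi hxi]
    ring
  simp only [relEntropy, hterm, sum_add_distrib, ← mul_sum, ← sum_mul, hq, one_mul]

lemma log_mwuPartition_le {η : ℝ} {x l : A → ℝ} (hx : x ∈ stdSimplex ℝ A)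
    (hl : ∀ i, -1 ≤ η * l i) :
    Real.log (mwuPartition η x l) ≤ -η * ∑ i, x i * l i + η ^ 2 * ∑ i, x i * l i ^ 2 := by
  have hZ : mwuPartition η x l ≤ 1 + -η * ∑ i, x i * l i + η ^ 2 * ∑ i, x i * l i ^ 2 := by
    calc mwuPartition η x l
        ≤ ∑ i, x i * (1 + -η * l i + (-η * l i) ^ 2) :=
          sum_le_sum fun i _ => mul_le_mul_of_nonneg_left
            (exp_le_one_add_add_sq (by linarith [hl i])) (hx.1 i)
      _ = ∑ i, (x i + -η * (x i * l i) + η ^ 2 * (x i * l i ^ 2)) :=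
          sum_congr rfl fun i _ => by ring
      _ = _ := by simp only [sum_add_distrib, ← mul_sum, hx.2]
  linarith [Real.log_le_sub_one_of_pos (mwuPartition_pos (pos_of_mem_stdSimplex hx) η l)]

lemma mul_sum_sub_mul_le_relEntropy_sub {η : ℝ} {x q l : A → ℝ} (hx : x ∈ stdSimplex ℝ A)
    (hq : ∑ i, q i = 1) (hqx : q.support ⊆ x.support) (hl : ∀ i, -1 ≤ η * l i) :
    η * ∑ i, (x i - q i) * l i ≤
      relEntropy q x - relEntropy q (mwuUpdate η x l) + η ^ 2 * ∑ i, x i * l i ^ 2 := by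
  have hpotential := relEntropy_mwuUpdate (pos_of_mem_stdSimplex hx) hq hqx η l
  have hlog := log_mwuPartition_le hx hl
  simp only [sub_mul, sum_sub_distrib]
  linarith

lemma mwu_mem_stdSimplex_and_support_eq {T : ℕ} {η : ℝ} {x ℓ : ℕ → A → ℝ}
    (hx : x 1 ∈ stdSimplex ℝ A)
    (hupd : ∀ t ∈ Icc 1 T, x (t + 1) = mwuUpdate η (x t) (ℓ t)) {t : ℕ} (ht : t ∈ Icc 1 (T + 1)) :
    x t ∈ stdSimplex ℝ A ∧ (x t).support = (x 1).support := by
  obtain ⟨ht_one, ht_le⟩ := mem_Icc.1 ht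
  induction t, ht_one using Nat.le_induction with
  | base => exact ⟨hx, rfl⟩
  | succ t ht_one ih =>
    obtain ⟨hmem, hsupp⟩ := ih (mem_Icc.2 ⟨ht_one, by lia⟩) (by lia)
    have hpos := pos_of_mem_stdSimplex hmem
    rw [hupd t (mem_Icc.2 ⟨ht_one, by lia⟩)]
    exact ⟨mwuUpdate_mem_stdSimplex hpos η _, (support_mwuUpdate hpos η _).trans hsupp⟩

lemma mwu_mul_regret_le {T : ℕ} {η : ℝ} {x ℓ : ℕ → A → ℝ} {q : A → ℝ}
    (hx : x 1 ∈ stdSimplex ℝ A) (hℓ : ∀ t ∈ Icc 1 T, ∀ i, -1 ≤ η * ℓ t i)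
    (hupd : ∀ t ∈ Icc 1 T, x (t + 1) = mwuUpdate η (x t) (ℓ t))
    (hq : q ∈ stdSimplex ℝ A) (hqx : q.support ⊆ (x 1).support) :
    η * ∑ t ∈ Icc 1 T, ∑ i, (x t i - q i) * ℓ t i ≤
      relEntropy q (x 1) + η ^ 2 * ∑ t ∈ Icc 1 T, ∑ i, x t i * ℓ t i ^ 2 := by
  have hinv {t : ℕ} (ht : t ∈ Icc 1 (T + 1)) := mwu_mem_stdSimplex_and_support_eq hx hupd ht
  have hround (t : ℕ) (ht : t ∈ Icc 1 T) : η * ∑ i, (x t i - q i) * ℓ t i ≤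
      -(relEntropy q (x (t + 1)) - relEntropy q (x t)) + η ^ 2 * ∑ i, x t i * ℓ t i ^ 2 := by
    obtain ⟨hmem, hsupp⟩ := hinv (Icc_subset_Icc_right T.le_succ ht)
    rw [hupd t ht, neg_sub]
    exact mul_sum_sub_mul_le_relEntropy_sub hmem hq.2 (hsupp ▸ hqx) (hℓ t ht)
  have htelescope : ∑ t ∈ Icc 1 T, (relEntropy q (x (t + 1)) - relEntropy q (x t)) =
      relEntropy q (x (T + 1)) - relEntropy q (x 1) := by
    rw [← Ico_add_one_right_eq_Icc]
    exact sum_Ico_sub (fun t => relEntropy q (x t)) (by lia)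
  have hfinal : 0 ≤ relEntropy q (x (T + 1)) := by
    obtain ⟨hmem, hsupp⟩ := hinv (right_mem_Icc.2 (by lia))
    exact relEntropy_nonneg hq.1 hmem.1 (hmem.2.trans hq.2.symm).le (hsupp ▸ hqx)
  have htotal := sum_le_sum hround
  rw [sum_add_distrib, sum_neg_distrib, htelescope, ← mul_sum, ← mul_sum] at htotal
  linarith

theorem stmt8_general {T : ℕ} {η : ℝ} (hη : 0 < η) {x ℓ : ℕ → A → ℝ} {q : A → ℝ}
    (hx : x 1 ∈ stdSimplex ℝ A) (hℓ : ∀ t ∈ Icc 1 T, ∀ i, -1 ≤ η * ℓ t i)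
    (hupd : ∀ t ∈ Icc 1 T, x (t + 1) = mwuUpdate η (x t) (ℓ t))
    (hq : q ∈ stdSimplex ℝ A) (hqx : q.support ⊆ (x 1).support) :
    ∑ t ∈ Icc 1 T, ∑ i, (x t i - q i) * ℓ t i ≤
      relEntropy q (x 1) / η + η * ∑ t ∈ Icc 1 T, (⨆ i, |ℓ t i|) ^ 2 := by
  have hsq : ∑ t ∈ Icc 1 T, ∑ i, x t i * ℓ t i ^ 2 ≤ ∑ t ∈ Icc 1 T, (⨆ i, |ℓ t i|) ^ 2 :=
    sum_le_sum fun t ht => sum_mul_sq_le_sq_iSup_abs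
      (mwu_mem_stdSimplex_and_support_eq hx hupd (Icc_subset_Icc_right T.le_succ ht)).1 (ℓ t)
  refine le_of_mul_le_mul_left ?_ hη
  calc η * ∑ t ∈ Icc 1 T, ∑ i, (x t i - q i) * ℓ t i
      ≤ relEntropy q (x 1) + η ^ 2 * ∑ t ∈ Icc 1 T, ∑ i, x t i * ℓ t i ^ 2 :=
        mwu_mul_regret_le hx hℓ hupd hq hqx
    _ ≤ relEntropy q (x 1) + η ^ 2 * ∑ t ∈ Icc 1 T, (⨆ i, |ℓ t i|) ^ 2 := by gcongr
    _ = η * (relEntropy q (x 1) / η + η * ∑ t ∈ Icc 1 T, (⨆ i, |ℓ t i|) ^ 2) := by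
        field_simp

end MultiplicativeWeights

/-- Multiplicative Weights Update with an arbitrary (full-support) prior on a
finite set `A` satisfies, against any comparator `q ∈ Δ(A)` and any nonnegative losses,
`Σ_{t=1}^T ⟨x_t − q, ℓ_t⟩ ≤ KL(q, x_1)/η + η Σ_{t=1}^T ‖ℓ_t‖_∞²`. -/
theorem stmt8 {A : Type*} [Fintype A] (T : ℕ) (η : ℝ) (hη : 0 < η)
    (x ℓ : ℕ → A → ℝ)
    (hx1pos : ∀ i, 0 < x 1 i) (hx1sum : ∑ i, x 1 i = 1)
    (hℓ : ∀ t ∈ Finset.Icc 1 T, ∀ i, 0 ≤ ℓ t i)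
    (hupd : ∀ t ∈ Finset.Icc 1 T, ∀ i,
      x (t + 1) i = x t i * Real.exp (-η * ℓ t i) / ∑ j, x t j * Real.exp (-η * ℓ t j))
    (q : A → ℝ) (hqpos : ∀ i, 0 ≤ q i) (hqsum : ∑ i, q i = 1) :
    ∑ t ∈ Finset.Icc 1 T, ∑ i, (x t i - q i) * ℓ t i ≤
      (∑ i, q i * Real.log (q i / x 1 i)) / η +
      η * ∑ t ∈ Finset.Icc 1 T, (⨆ i, |ℓ t i|) ^ 2 :=
  stmt8_general hη ⟨fun i => (hx1pos i).le, hx1sum⟩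
    (fun t ht i => by linarith [mul_nonneg hη.le (hℓ t ht i)]) (fun t ht => funext (hupd t ht))
    ⟨hqpos, hqsum⟩ fun i _ => (hx1pos i).ne'
end

section
/- For any d ≥ 2, any φ ∈ S and any q ∈ Q_φ, the KL divergence to the special prior satisfies KL(q, π) ≤ 2 d log d + 1. Consequently, letting M = 2⌈log₂ d⌉ and η_h = √(2^h/T) for h ∈ [M] (with T ≥ 1), there exists h ∈ [M] such that η_h ≤ max{√(KL(q,π)/T), √(2/T)} ≤ 2 η_h. -/
open Finset

/-!
The prior mixes `d + 1` product distributions, and smoothing by the uniform distribution keeps every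
factor of every component at least `1 / (d (d - 1)) ≥ d⁻²`. Hence `π ≥ d⁻²ᵈ` on all of `Φ_b`, and
the entropy of `q` being nonnegative, `KL(q, π) ≤ - log (min π) ≤ 2 d log d`.
Since `log d ≤ d ≤ 2 ^ ⌈log₂ d⌉`, the number `max (KL(q, π)) 2` lies in `[2, 2 ^ (M + 1)]`, so it
falls between two consecutive powers `2 ^ h` and `2 ^ (h + 1)` with `h ∈ [M]`, whose square roots
differ by a factor `√2` only.
-/

theorem sum_mul_log_div_le_neg_log {ι : Type*} [Fintype ι] {p q : ι → ℝ} {c : ℝ} (hc : 0 < c)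
    (hp : ∀ i, c ≤ p i) (hq : q ∈ stdSimplex ℝ ι) :
    ∑ i, q i * Real.log (q i / p i) ≤ -Real.log c := by
  have term_le (i : ι) : q i * Real.log (q i / p i) ≤ q i * -Real.log c := by
    obtain hqi | hqi := (hq.1 i).eq_or_lt
    · simp [← hqi]
    · have hq_le_one : q i ≤ 1 := hq.2 ▸ single_le_sum (fun j _ ↦ hq.1 j) (mem_univ i)
      have ratio_le : q i / p i ≤ c⁻¹ := by
        rw [← one_div]
        exact div_le_div₀ zero_le_one hq_le_one hc (hp i)
      rw [← Real.log_inv]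
      gcongr
      exact div_pos hqi (hc.trans_le (hp i))
  calc ∑ i, q i * Real.log (q i / p i) ≤ ∑ i, q i * -Real.log c := sum_le_sum fun i _ ↦ term_le i
    _ = -Real.log c := by rw [← sum_mul, hq.2, one_mul]

theorem exists_mem_Icc_le_le_succ {α : Type*} [LinearOrder α] {u : ℕ → α} {x : α} {m n : ℕ}
    (hmn : m ≤ n) (hm : u m ≤ x) (hn : x ≤ u (n + 1)) :
    ∃ k ∈ Icc m n, u k ≤ x ∧ x ≤ u (k + 1) := by
  induction n, hmn using Nat.le_induction with
  | base => exact ⟨m, by simp, hm, hn⟩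
  | succ n hmn ih =>
    obtain hx | hx := le_total x (u (n + 1))
    · obtain ⟨k, hk, hkx⟩ := ih hx
      exact ⟨k, Icc_subset_Icc_right n.le_succ hk, hkx⟩
    · exact ⟨n + 1, right_mem_Icc.2 (hmn.trans n.le_succ), hx, hn⟩

theorem exists_sqrt_pow_div_le_max_le {b t x : ℝ} {M : ℕ} (hb : 1 ≤ b) (ht : 0 < t) (hM : 1 ≤ M)
    (hx : x ≤ b ^ (M + 1)) :
    ∃ h ∈ Icc 1 M, √(b ^ h / t) ≤ max √(x / t) √(b / t) ∧
      max √(x / t) √(b / t) ≤ √b * √(b ^ h / t) := by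
  have hmax : max √(x / t) √(b / t) = √(max x b / t) := by
    rw [← Real.sqrt_monotone.map_max, max_div_div_right ht.le]
  have hle : max x b ≤ b ^ (M + 1) := max_le hx (le_self_pow₀ hb M.succ_ne_zero)
  obtain ⟨h, hh, hlow, hupp⟩ :=
    exists_mem_Icc_le_le_succ (u := (b ^ ·)) hM (by simp) hle
  refine ⟨h, hh, ?_, ?_⟩ <;> rw [hmax]
  · gcongr
  · rw [← Real.sqrt_mul (zero_le_one.trans hb), ← mul_div_assoc, ← pow_succ']
    gcongr

theorem sq_le_pow_two_mul_clog {b : ℕ} (hb : 1 < b) (n : ℕ) : n ^ 2 ≤ b ^ (2 * Nat.clog b n) := by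
  rw [mul_comm, pow_mul]
  gcongr
  exact Nat.le_pow_clog hb n

theorem two_mul_mul_log_le_two_pow_clog (n : ℕ) :
    2 * (n : ℝ) * Real.log n ≤ 2 ^ (2 * Nat.clog 2 n + 1) :=
  calc 2 * (n : ℝ) * Real.log n ≤ 2 * n * n := by
        gcongr
        exact Real.log_le_self n.cast_nonneg
    _ = (n : ℝ) ^ 2 * 2 := by ring
    _ ≤ 2 ^ (2 * Nat.clog 2 n) * 2 := by
        gcongr
        exact_mod_cast sq_le_pow_two_mul_clog one_lt_two n
    _ = 2 ^ (2 * Nat.clog 2 n + 1) := (pow_succ ..).symm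

section Prior

variable {d : ℕ}

theorem pow_le_piInd_toMat {ψ : Matrix (Fin d) (Fin d) ℝ} {c : ℝ} (hc : 0 ≤ c)
    (hψ : ∀ i j, c ≤ ψ i j) (f : Fin d → Fin d) : c ^ d ≤ piInd ψ (toMat d f) := by
  rw [piInd_toMat]
  simpa using prod_le_prod (s := univ) (fun _ _ ↦ hc) fun i _ ↦ hψ i (f i)

theorem le_priorPi {φ : Matrix (Fin d) (Fin d) ℝ} {c : ℝ} (hd : d ≠ 0)
    (hK : ∀ k, c ≤ piInd (psiK d k) φ) (hSelf : c ≤ piInd (psiSelf d) φ) : c ≤ priorPi d φ := by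
  have hsum : d * c ≤ ∑ k, piInd (psiK d k) φ := by
    simpa using card_nsmul_le_sum univ _ c fun k _ ↦ hK k
  calc c = 1 / (2 * d) * (d * c) + 1 / 2 * c := by field_simp; ring
    _ ≤ priorPi d φ := by unfold priorPi; gcongr

theorem inv_sq_le_smoothing {x t : ℝ} (hx : 2 ≤ x) (ht : 0 ≤ t) :
    (x ^ 2)⁻¹ ≤ (x - 2) / (x - 1) * t + 1 / (x * (x - 1)) := by
  have hcoeff : 0 ≤ (x - 2) / (x - 1) := div_nonneg (by linarith) (by linarith)
  have hunif : (x ^ 2)⁻¹ ≤ 1 / (x * (x - 1)) := by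
    rw [← one_div]
    exact one_div_le_one_div_of_le (mul_pos (by linarith) (by linarith)) (by nlinarith)
  exact hunif.trans (le_add_of_nonneg_left (mul_nonneg hcoeff ht))

theorem inv_sq_pow_le_priorPi (hd : 2 ≤ d) (f : Fin d → Fin d) :
    ((d : ℝ) ^ 2)⁻¹ ^ d ≤ priorPi d (toMat d f) := by
  have hd' : (2 : ℝ) ≤ d := by exact_mod_cast hd
  have hc : 0 ≤ ((d : ℝ) ^ 2)⁻¹ := by positivity
  exact le_priorPi (by lia)
    (fun _ ↦ pow_le_piInd_toMat hc (fun _ _ ↦ inv_sq_le_smoothing hd' (by positivity)) f)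
    (pow_le_piInd_toMat hc (fun _ _ ↦ inv_sq_le_smoothing hd' (by positivity)) f)

theorem klPrior_le (hd : 2 ≤ d) {q : (Fin d → Fin d) → ℝ} (hq : q ∈ stdSimplex ℝ (Fin d → Fin d)) :
    klPrior d q ≤ 2 * d * Real.log d :=
  calc klPrior d q ≤ -Real.log (((d : ℝ) ^ 2)⁻¹ ^ d) :=
        sum_mul_log_div_le_neg_log (by positivity) (inv_sq_pow_le_priorPi hd) hq
    _ = 2 * d * Real.log d := by
        rw [Real.log_pow, Real.log_inv, Real.log_pow]
        push_cast
        ring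

end Prior

/-- For any `d ≥ 2`, any row-stochastic `φ` and any `q ∈ Q_φ`,
`KL(q, π) ≤ 2 d log d + 1`; consequently, with `M = 2⌈log₂ d⌉` and `η_h = √(2^h/T)`, there is
`h ∈ [M]` with `η_h ≤ max{√(KL(q,π)/T), √(2/T)} ≤ 2 η_h`. -/
theorem stmt9 (d T : ℕ) (hd : 2 ≤ d) (hT : 1 ≤ T)
    (φ : Matrix (Fin d) (Fin d) ℝ) (hφ : RowStochastic φ)
    (q : (Fin d → Fin d) → ℝ) (hq : q ∈ QSet d φ) :
    klPrior d q ≤ 2 * (d : ℝ) * Real.log d + 1 ∧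
    ∃ h ∈ Finset.Icc 1 (2 * Nat.clog 2 d),
      Real.sqrt ((2 : ℝ) ^ h / (T : ℝ)) ≤
          max (Real.sqrt (klPrior d q / (T : ℝ))) (Real.sqrt (2 / (T : ℝ))) ∧
      max (Real.sqrt (klPrior d q / (T : ℝ))) (Real.sqrt (2 / (T : ℝ))) ≤
          2 * Real.sqrt ((2 : ℝ) ^ h / (T : ℝ)) := by
  have hkl : klPrior d q ≤ 2 * d * Real.log d := klPrior_le hd ⟨hq.1, hq.2.1⟩
  have hM : 1 ≤ 2 * Nat.clog 2 d := by
    have := Nat.clog_pos one_lt_two hd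
    lia
  have hT' : (0 : ℝ) < T := by exact_mod_cast hT
  obtain ⟨h, hh, hlow, hupp⟩ := exists_sqrt_pow_div_le_max_le one_le_two hT' hM
    (hkl.trans (two_mul_mul_log_le_two_pow_clog d))
  refine ⟨by linarith, h, hh, hlow, hupp.trans ?_⟩
  gcongr
  exact Real.sqrt_le_iff.2 (by norm_num)
end
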